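/- arXiv:1602.01286 — 2 statements merged into one kernel-verified Lean document; each statement's English description precedes it below -/
import Mathlib

section
/- There exist constants C > 0 and n₀ such that the following holds. Let n ≥ n₀, let L be a positive integer with L < 0.5·n^{1/2}, let W = W(n, L), and let S ⊆ Z_n be an arbitrary nonempty set. Let U be the set of u ∈ Z_n that cannot be represented as u = s + w with (s, w) ∈ S × W. Then #U · #S · (#𝓛)^{2} · (log log n)^{2} ≤ C · n^{2} (log n)^{4}; equivalently, if 𝓛 is nonempty, #U ≤ C · n^{2} (log n)^{4} / (#S · (#𝓛)^{2} · (log log n)^{2}). -/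
/-- The set `𝓛 = 𝓛(n, L)` of primes `ℓ` with `L < ℓ ≤ 2L` and `gcd(ℓ, n) = 1`. -/
def calL (n L : ℕ) : Finset ℕ :=
  (Finset.Ioc L (2 * L)).filter fun ℓ => Nat.Prime ℓ ∧ Nat.Coprime ℓ n

/-- The set `W = W(n, L) = {k·ℓ⁻¹ mod n : 1 ≤ k ≤ L, ℓ ∈ 𝓛} ⊆ Z_n`. -/
def calW (n L : ℕ) : Finset (ZMod n) :=
  ((Finset.Icc 1 L) ×ˢ calL n L).image fun p => (p.1 : ZMod n) * (p.2 : ZMod n)⁻¹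

open Finset in
lemma fac_card_le_prod (s : Finset ℕ) (hs : ∀ i ∈ s, 0 < i) : s.card.factorial ≤ ∏ i ∈ s, i := by
  induction s using Finset.induction_on_max with
  | empty => simp
  | insert a s ha ih =>
    have hn : a ∉ s := fun h => lt_irrefl _ (ha a h)
    rw [Finset.card_insert_of_notMem hn, Finset.prod_insert hn, Nat.factorial_succ]
    have h1 : s.card ≤ (Finset.Ioo 0 a).card := Finset.card_le_card (fun x hx => by
      simp only [Finset.mem_Ioo]
      exact ⟨hs x (Finset.mem_insert_of_mem hx), ha x hx⟩)
    have h2 : 0 < a := hs a (Finset.mem_insert_self _ _)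
    rw [Nat.card_Ioo] at h1
    exact Nat.mul_le_mul (by omega) (ih fun i hi => hs i (Finset.mem_insert_of_mem hi))

lemma log_real_ge {n : ℕ} (hn : 16 ≤ n) : 2 ≤ Real.log n := by
  have h : Real.log 16 ≤ Real.log n := Real.log_le_log (by norm_num) (by exact_mod_cast hn)
  have h2 : Real.log 16 = 4 * Real.log 2 := by
    rw [show (16:ℝ) = 2 ^ 4 by norm_num, Real.log_pow]; norm_num
  have := Real.log_two_gt_d9
  linarith

lemma omega_bound (n : ℕ) (hn : 16 ≤ n) (m : ℕ) (hm0 : m ≠ 0) (hm : m ≤ n ^ 2) (s : Finset ℕ)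
    (hp : ∀ p ∈ s, p.Prime) (hd : ∀ p ∈ s, p ∣ m) :
    (s.card : ℝ) * Real.log (Real.log n) ≤ 6 * Real.log n := by
  set x := Real.log n with hx
  have hx2 : 2 ≤ x := log_real_ge hn
  have hlx : 0 < Real.log x := Real.log_pos (by linarith)
  rcases Nat.eq_zero_or_pos s.card with h0 | hk
  · rw [h0]; simp; linarith
  have h1 : s.card.factorial ≤ n ^ 2 :=
    ((fac_card_le_prod s fun i hi => (hp i hi).pos).trans (Nat.le_of_dvd (Nat.pos_of_ne_zero hm0)
      (Finset.prod_primes_dvd m (fun p h => (hp p h).prime) hd))).trans hm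
  set k := s.card with hkdef
  have hkR : (0:ℝ) < k := by exact_mod_cast hk
  have hnR : (0:ℝ) < n := by exact_mod_cast (by omega : 0 < n)
  have h2 : (k:ℝ) ^ k ≤ Real.exp k * (n:ℝ) ^ 2 := by
    have h := Real.pow_div_factorial_le_exp (k:ℝ) hkR.le k
    have hf : (0:ℝ) < k.factorial := by exact_mod_cast k.factorial_pos
    rw [div_le_iff₀ hf] at h
    refine h.trans ?_
    gcongr
    exact_mod_cast h1
  have h3 : k * Real.log k ≤ k + 2 * x := by
    have h := Real.log_le_log (by positivity) h2
    rw [Real.log_pow, Real.log_mul (by positivity) (by positivity), Real.log_exp, Real.log_pow] at h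
    simpa using h
  have hs : 0 < √x := Real.sqrt_pos.2 (by linarith)
  have hss : √x * √x = x := Real.mul_self_sqrt (by linarith)
  have hls : Real.log x = 2 * Real.log (√x) := by
    rw [Real.log_sqrt (by linarith)]; ring
  rcases le_total (k:ℝ) (Real.exp 1 * √x) with h | h
  · have e1 : Real.exp 1 ≤ 3 := by have := Real.exp_one_lt_d9; linarith
    have e2 : Real.log x ≤ 2 * √x := by
      have := Real.log_le_sub_one_of_pos hs; linarith
    calc (k:ℝ) * Real.log x ≤ (3 * √x) * (2 * √x) := by
          gcongr
          exact h.trans (by gcongr)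
      _ = 6 * (√x * √x) := by ring
      _ = 6 * x := by rw [hss]
  · have h4 := Real.log_le_log (by positivity) h
    rw [Real.log_mul (by positivity) (by positivity), Real.log_exp] at h4
    have h5 : (k:ℝ) * (1 + Real.log (√x)) ≤ k * Real.log k := by gcongr
    rw [hls]
    nlinarith

open ZMod in
lemma geom_bound (n : ℕ) [NeZero n] (L : ℕ) (b : ZMod n) (hb : b ≠ 0) :
    ‖∑ k ∈ Finset.Icc 1 L, stdAddChar ((k : ZMod n) * b)‖ * |(b.valMinAbs : ℝ)| ≤ n / 2 := by
  have hn : (0:ℝ) < n := by exact_mod_cast Nat.pos_of_ne_zero (NeZero.ne n)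
  set z : ℂ := stdAddChar b with hz
  set c : ℝ := (b.valMinAbs : ℝ) with hc
  have hcn : |c| ≤ n / 2 := by
    have h := b.valMinAbs_mem_Ioc
    obtain ⟨h1, h2⟩ := h
    have h1' : (-(n:ℝ)) < c * 2 := by rw [hc]; exact_mod_cast h1
    have h2' : c * 2 ≤ n := by rw [hc]; exact_mod_cast h2
    rw [abs_le]; constructor <;> linarith
  have hc0 : c ≠ 0 := by
    rw [hc]; simpa using hb
  have hzc : z = Complex.exp (Complex.I * ((2 * Real.pi * c / n : ℝ))) := by
    rw [hz]
    conv_lhs => rw [← b.coe_valMinAbs]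
    rw [stdAddChar_coe]
    congr 1
    push_cast [hc]
    ring
  have hz1 : 4 * |c| / n ≤ ‖z - 1‖ := by
    rw [hzc, Complex.norm_exp_I_mul_ofReal_sub_one, norm_mul, Real.norm_eq_abs, Real.norm_eq_abs]
    have h : 2 * Real.pi * c / n / 2 = Real.pi * c / n := by ring
    rw [h, Real.abs_sin_eq_sin_abs_of_abs_le_pi]
    · have h3 := Real.mul_le_sin (x := |Real.pi * c / n|) (abs_nonneg _) ?_
      · have h4 : 2 / Real.pi * |Real.pi * c / n| = 2 * |c| / n := by
          rw [abs_div, abs_mul, abs_of_pos Real.pi_pos, abs_of_pos hn]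
          field_simp
        rw [h4] at h3
        rw [abs_of_pos (by norm_num : (0:ℝ) < 2)]
        calc 4 * |c| / n = 2 * (2 * |c| / n) := by ring
          _ ≤ _ := by gcongr
      · rw [abs_div, abs_mul, abs_of_pos Real.pi_pos, abs_of_pos hn, div_le_iff₀ hn]
        nlinarith [Real.pi_pos]
    · rw [abs_div, abs_mul, abs_of_pos Real.pi_pos, abs_of_pos hn, div_le_iff₀ hn]
      nlinarith [Real.pi_pos]
  have hcp : 0 < |c| := abs_pos.2 hc0
  have hznorm : ‖z‖ = 1 := by
    rw [hzc, mul_comm, Complex.norm_exp_ofReal_mul_I]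
  have hsum : (∑ k ∈ Finset.Icc 1 L, stdAddChar ((k : ZMod n) * b)) * (z - 1)
      = z ^ (L + 1) - z ^ 1 := by
    rw [← geom_sum_Ico_mul z (by omega : 1 ≤ L + 1)]
    congr 1
    apply Finset.sum_congr
    · ext; simp
    · intro k _
      rw [hz, ← AddChar.map_nsmul_eq_pow, nsmul_eq_mul]
  have h5 : ‖∑ k ∈ Finset.Icc 1 L, stdAddChar ((k : ZMod n) * b)‖ * ‖z - 1‖ ≤ 2 := by
    rw [← norm_mul, hsum]
    refine (norm_sub_le _ _).trans ?_
    rw [norm_pow, norm_pow, hznorm]; norm_num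
  have h6 := (mul_le_mul_of_nonneg_left hz1 (norm_nonneg _)).trans h5
  have h7 : ‖∑ k ∈ Finset.Icc 1 L, stdAddChar ((k : ZMod n) * b)‖ * (4 * |c| / n) =
    4 / n * (‖∑ k ∈ Finset.Icc 1 L, stdAddChar ((k : ZMod n) * b)‖ * |c|) := by ring
  rw [h7] at h6
  rw [div_mul_eq_mul_div, div_le_iff₀ hn] at h6
  linarith

open ZMod in
lemma orth (n : ℕ) [NeZero n] (x : ZMod n) :
    ∑ a : ZMod n, (stdAddChar (a * x) : ℂ) = if x = 0 then (n:ℂ) else 0 := by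
  have h := AddChar.sum_mulShift x (isPrimitive_stdAddChar n)
  rw [h]; simp [ZMod.card]

open ZMod in
lemma parseval (n : ℕ) [NeZero n] (S : Finset (ZMod n)) :
    ∑ a : ZMod n, ‖∑ s ∈ S, (stdAddChar (a * s) : ℂ)‖ ^ 2 = n * S.card := by
  have h : ∀ a : ZMod n, ((‖∑ s ∈ S, (stdAddChar (a * s) : ℂ)‖ ^ 2 : ℝ) : ℂ)
      = ∑ s ∈ S, ∑ t ∈ S, stdAddChar (a * (s - t)) := by
    intro a
    push_cast
    rw [← Complex.mul_conj', map_sum, Finset.sum_mul_sum]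
    refine Finset.sum_congr rfl fun s _ => Finset.sum_congr rfl fun t _ => ?_
    rw [mul_sub, sub_eq_add_neg, AddChar.map_add_eq_mul, AddChar.map_neg_eq_conj]
  have : ((∑ a : ZMod n, ‖∑ s ∈ S, (stdAddChar (a * s) : ℂ)‖ ^ 2 : ℝ) : ℂ) = ((n * S.card : ℝ):ℂ) := by
    rw [Complex.ofReal_sum, Finset.sum_congr rfl fun a _ => h a, Finset.sum_comm]
    have : ∀ s ∈ S, ∑ a : ZMod n, ∑ t ∈ S, (stdAddChar (a * (s - t)) : ℂ) = n := by
      intro s hs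
      rw [Finset.sum_comm]
      simp_rw [orth, sub_eq_zero]
      simp [hs]
    rw [Finset.sum_congr rfl this]
    simp [mul_comm]
  exact_mod_cast this

open ZMod in
lemma fourier_bound (n : ℕ) [NeZero n] (U S : Finset (ZMod n)) {ι : Type*} (P : Finset ι)
    (w : ι → ZMod n) (hU : ∀ u ∈ U, ∀ s ∈ S, ∀ p ∈ P, u ≠ s + w p) (M : ℝ)
    (hM : ∀ a : ZMod n, a ≠ 0 → ‖∑ p ∈ P, (stdAddChar (a * w p) : ℂ)‖ ≤ M) (hM0 : 0 ≤ M) :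
    (U.card : ℝ) * S.card * (P.card:ℝ) ^ 2 ≤ n ^ 2 * M ^ 2 := by
  set A : ZMod n → ℂ := fun a => ∑ u ∈ U, (stdAddChar (a * u) : ℂ) with hA
  set B : ZMod n → ℂ := fun a => ∑ s ∈ S, (stdAddChar (a * s) : ℂ) with hB
  set D : ZMod n → ℂ := fun a => ∑ p ∈ P, (stdAddChar (a * w p) : ℂ) with hD
  have hzero : ∑ a, (starRingEnd ℂ (A a)) * B a * D a = 0 := by
    have : ∀ a, (starRingEnd ℂ (A a)) * B a * D a
        = ∑ u ∈ U, ∑ s ∈ S, ∑ p ∈ P, stdAddChar (a * (s + w p - u)) := by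
      intro a
      simp only [hA, hB, hD]
      rw [map_sum, Finset.sum_mul_sum, Finset.sum_mul]
      refine Finset.sum_congr rfl fun u _ => ?_
      rw [Finset.sum_mul_sum]
      refine Finset.sum_congr rfl fun s _ => Finset.sum_congr rfl fun p _ => ?_
      rw [← AddChar.map_neg_eq_conj, ← AddChar.map_add_eq_mul, ← AddChar.map_add_eq_mul]
      congr 1; ring
    rw [Finset.sum_congr rfl fun a _ => this a, Finset.sum_comm]
    refine Finset.sum_eq_zero fun u hu => ?_
    rw [Finset.sum_comm]
    refine Finset.sum_eq_zero fun s hs => ?_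
    rw [Finset.sum_comm]
    refine Finset.sum_eq_zero fun p hp => ?_
    rw [orth, if_neg]
    intro h
    exact hU u hu s hs p hp (sub_eq_zero.1 h).symm
  have h0 : (starRingEnd ℂ (A 0)) * B 0 * D 0 = (U.card : ℂ) * S.card * P.card := by
    simp [hA, hB, hD]
  rw [← Finset.add_sum_erase _ _ (Finset.mem_univ (0 : ZMod n)), h0] at hzero
  have h1 : (U.card : ℝ) * S.card * P.card ≤ M * ∑ a, ‖A a‖ * ‖B a‖ := by
    have h2 : (U.card : ℂ) * S.card * P.card
        = -∑ a ∈ Finset.univ.erase (0 : ZMod n), (starRingEnd ℂ (A a)) * B a * D a :=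
      eq_neg_of_add_eq_zero_left hzero
    have h3 : ‖(U.card : ℂ) * S.card * P.card‖ = (U.card : ℝ) * S.card * P.card := by simp
    rw [← h3, h2, norm_neg]
    refine (norm_sum_le _ _).trans ?_
    rw [Finset.mul_sum]
    calc _ ≤ ∑ a ∈ Finset.univ.erase (0 : ZMod n), M * (‖A a‖ * ‖B a‖) := by
          refine Finset.sum_le_sum fun a ha => ?_
          rw [norm_mul, norm_mul, RCLike.norm_conj, mul_comm]
          gcongr
          exact hM a (Finset.ne_of_mem_erase ha)
      _ ≤ _ := Finset.sum_le_sum_of_subset_of_nonneg (Finset.erase_subset _ _)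
          fun _ _ _ => by positivity
  have h4 : (∑ a, ‖A a‖ * ‖B a‖) ^ 2 ≤ (n * U.card) * (n * S.card) := by
    refine (Finset.sum_mul_sq_le_sq_mul_sq _ _ _).trans ?_
    rw [← parseval n U, ← parseval n S]
  have h5 : ((U.card : ℝ) * S.card * P.card) ^ 2 ≤ M ^ 2 * ((n * U.card) * (n * S.card)) := by
    calc _ ≤ (M * ∑ a, ‖A a‖ * ‖B a‖) ^ 2 := by gcongr
      _ = M ^ 2 * (∑ a, ‖A a‖ * ‖B a‖) ^ 2 := by ring
      _ ≤ _ := by gcongr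
  rcases (by positivity : (0:ℝ) ≤ (U.card : ℝ) * S.card).eq_or_lt with h | h
  · rw [← h]; simp; positivity
  · refine le_of_mul_le_mul_left ?_ h
    calc _ = ((U.card : ℝ) * S.card * P.card) ^ 2 := by ring
      _ ≤ _ := h5
      _ = _ := by ring

lemma harm_bound (n : ℕ) (hn : 16 ≤ n) :
    ∑ i ∈ Finset.range (n + 1), (1 : ℝ) / ((i : ℝ) + 1) ≤ 3 * Real.log n := by
  have h := harmonic_le_one_add_log (n + 1)
  have h1 : ((harmonic (n + 1) : ℚ) : ℝ) = ∑ i ∈ Finset.range (n + 1), (1 : ℝ) / ((i : ℝ) + 1) := by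
    simp [harmonic]
  rw [h1] at h
  have h2 : Real.log ((n + 1 : ℕ) : ℝ) ≤ 2 * Real.log n := by
    rw [← Real.log_rpow (by positivity)]
    apply Real.log_le_log (by positivity)
    norm_cast
    nlinarith
  have := log_real_ge hn
  linarith

open ZMod in
lemma expsum_bound (n : ℕ) [NeZero n] (hn : 16 ≤ n) (L : ℕ) (hL : 0 < L) (hLn : 2 * L ≤ n)
    (a : ZMod n) (ha : a ≠ 0) :
    ‖∑ p ∈ (Finset.Icc 1 L) ×ˢ calL n L,
      (stdAddChar (a * ((p.1 : ZMod n) * (p.2 : ZMod n)⁻¹)) : ℂ)‖ * Real.log (Real.log n)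
      ≤ 144 * L * (Real.log n) ^ 2 := by
  have hnpos : (0:ℝ) < n := by exact_mod_cast (by omega : 0 < n)
  have hlog := log_real_ge hn
  have hll : 0 < Real.log (Real.log n) := Real.log_pos (by linarith)
  set b : ℕ → ZMod n := fun l => a * (l : ZMod n)⁻¹ with hb
  set F : ℕ → ℝ := fun l => ‖∑ k ∈ Finset.Icc 1 L, (stdAddChar ((k : ZMod n) * b l) : ℂ)‖ with hF
  set t : ℕ → ℤ := fun l => (l * (b l).valMinAbs - a.valMinAbs) / n with ht
  have hmem : ∀ l ∈ calL n L, L < l ∧ l ≤ 2 * L ∧ l.Prime ∧ l.Coprime n := by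
    intro l hl
    simp only [calL, Finset.mem_filter, Finset.mem_Ioc] at hl
    tauto
  have hlb : ∀ l ∈ calL n L, (l : ZMod n) * b l = a := by
    intro l hl
    have := ZMod.coe_mul_inv_eq_one l (hmem l hl).2.2.2
    calc (l : ZMod n) * b l = a * ((l : ZMod n) * (l : ZMod n)⁻¹) := by rw [hb]; ring
      _ = a := by rw [this, mul_one]
  have hb0 : ∀ l ∈ calL n L, b l ≠ 0 := by
    intro l hl h
    have := hlb l hl
    rw [h, mul_zero] at this
    exact ha this.symm
  have hteq : ∀ l ∈ calL n L, (l : ℤ) * (b l).valMinAbs = a.valMinAbs + n * t l := by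
    intro l hl
    have hd : (n : ℤ) ∣ l * (b l).valMinAbs - a.valMinAbs := by
      rw [← ZMod.intCast_zmod_eq_zero_iff_dvd]
      push_cast
      rw [hlb l hl, sub_self]
    have := Int.mul_ediv_cancel' hd
    simp only [ht]
    linarith
  have hvm : ∀ x : ZMod n, |x.valMinAbs| * 2 ≤ n := by
    intro x
    obtain ⟨h1, h2⟩ := x.valMinAbs_mem_Ioc
    rcases abs_cases x.valMinAbs with ⟨h, _⟩ | ⟨h, _⟩ <;> rw [h] <;> linarith
  have habs : ∀ l ∈ calL n L, |(l : ℤ) * (b l).valMinAbs| ≤ L * n := by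
    intro l hl
    rw [abs_mul, Nat.abs_cast]
    have h1 := hvm (b l)
    have h2 : (l : ℤ) ≤ 2 * L := by exact_mod_cast (hmem l hl).2.1
    nlinarith [abs_nonneg (b l).valMinAbs]
  have htn : ∀ l ∈ calL n L, (t l).natAbs ∈ Finset.range (n + 1) := by
    intro l hl
    have h1 := habs l hl
    have h2 := hvm a
    have h3 : (n : ℤ) * |t l| ≤ L * n + n := by
      have : (n : ℤ) * |t l| = |(l : ℤ) * (b l).valMinAbs - a.valMinAbs| := by
        rw [hteq l hl, add_sub_cancel_left, abs_mul, Nat.abs_cast]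
      rw [this]
      have h4 := abs_sub ((l : ℤ) * (b l).valMinAbs) a.valMinAbs
      have := abs_nonneg a.valMinAbs
      linarith
    have h5 : |t l| ≤ L + 1 := by
      have hnz : (0 : ℤ) < n := by exact_mod_cast (by omega : 0 < n)
      nlinarith
    rw [Int.abs_eq_natAbs] at h5
    rw [Finset.mem_range]
    omega
  have hF0 : ∀ l, 0 ≤ F l := fun l => norm_nonneg _
  have hFb : ∀ l ∈ calL n L, F l ≤ 4 * L * (1 / (((t l).natAbs : ℝ) + 1)) := by
    intro l hl
    have h1 : F l ≤ L := by
      refine (norm_sum_le _ _).trans ?_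
      simp
    have h2 : F l * |((b l).valMinAbs : ℝ)| ≤ n / 2 := geom_bound n L (b l) (hb0 l hl)
    have h3 : (n : ℝ) * |(t l : ℝ)| ≤ n / 2 + 2 * L * |((b l).valMinAbs : ℝ)| := by
      have e : (n : ℝ) * |(t l : ℝ)| = |(l : ℝ) * (b l).valMinAbs - a.valMinAbs| := by
        have : (l : ℝ) * (b l).valMinAbs = a.valMinAbs + n * t l := by exact_mod_cast hteq l hl
        rw [this, add_sub_cancel_left, abs_mul, Nat.abs_cast]
      have h4 := abs_sub ((l : ℝ) * (b l).valMinAbs) (a.valMinAbs : ℝ)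
      rw [abs_mul, Nat.abs_cast] at h4
      have h5 : |(a.valMinAbs : ℝ)| * 2 ≤ n := by exact_mod_cast hvm a
      have h6 : (l : ℝ) * |((b l).valMinAbs : ℝ)| ≤ 2 * L * |((b l).valMinAbs : ℝ)| := by
        gcongr
        exact_mod_cast (hmem l hl).2.1
      linarith
    have h7 : F l * |(t l : ℝ)| ≤ F l / 2 + L := by
      have h8 := mul_le_mul_of_nonneg_left h3 (hF0 l)
      have h9 : (0:ℝ) ≤ L := by positivity
      have h10 := mul_le_mul_of_nonneg_left h2 h9
      refine le_of_mul_le_mul_left ?_ hnpos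
      nlinarith
    have h11 : ((t l).natAbs : ℝ) = |(t l : ℝ)| := by
      rw [Nat.cast_natAbs]; push_cast; rfl
    rw [mul_one_div, le_div_iff₀ (by positivity), h11]
    linarith [hF0 l]
  have hfib : ∀ z : ℤ, (((calL n L).filter fun l => t l = z).card : ℝ) * Real.log (Real.log n)
      ≤ 6 * Real.log n := by
    intro z
    rcases Finset.eq_empty_or_nonempty ((calL n L).filter fun l => t l = z) with h | ⟨l₀, hl₀⟩
    · rw [h]; simp; linarith
    · rw [Finset.mem_filter] at hl₀
      apply omega_bound n hn (a.valMinAbs + n * z).natAbs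
      · rw [Ne, Int.natAbs_eq_zero]
        intro h
        apply ha
        have := congrArg (Int.cast : ℤ → ZMod n) h
        push_cast at this
        simpa using this
      · have h1 := habs l₀ hl₀.1
        rw [hteq l₀ hl₀.1, hl₀.2, Int.abs_eq_natAbs] at h1
        have h2 : (L : ℤ) * n ≤ ((n ^ 2 : ℕ) : ℤ) := by
          norm_cast
          nlinarith
        omega
      · intro p hp
        rw [Finset.mem_filter] at hp
        exact (hmem p hp.1).2.2.1
      · intro p hp
        rw [Finset.mem_filter] at hp
        rw [← Int.natCast_dvd, ← hp.2, ← hteq p hp.1]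
        exact dvd_mul_right _ _
  have hfib2 : ∀ i : ℕ, (((calL n L).filter fun l => (t l).natAbs = i).card : ℝ)
      * Real.log (Real.log n) ≤ 12 * Real.log n := by
    intro i
    have h1 : ((calL n L).filter fun l => (t l).natAbs = i).card ≤
        ((calL n L).filter fun l => t l = (i : ℤ)).card
        + ((calL n L).filter fun l => t l = -(i : ℤ)).card := by
      refine (Finset.card_le_card ?_).trans (Finset.card_union_le _ _)
      intro l hl
      simp only [Finset.mem_filter, Finset.mem_union] at hl ⊢
      rcases Int.natAbs_eq_iff.1 hl.2 with h | h
      · exact Or.inl ⟨hl.1, h⟩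
      · exact Or.inr ⟨hl.1, h⟩
    have h2 : (((calL n L).filter fun l => (t l).natAbs = i).card : ℝ) ≤
        ((calL n L).filter fun l => t l = (i : ℤ)).card
        + ((calL n L).filter fun l => t l = -(i : ℤ)).card := by exact_mod_cast h1
    have h3 := mul_le_mul_of_nonneg_right h2 hll.le
    have := hfib i
    have := hfib (-i)
    linarith
  have hmain : ‖∑ p ∈ (Finset.Icc 1 L) ×ˢ calL n L,
      (stdAddChar (a * ((p.1 : ZMod n) * (p.2 : ZMod n)⁻¹)) : ℂ)‖ ≤ ∑ l ∈ calL n L, F l := by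
    rw [Finset.sum_product_right]
    refine (norm_sum_le _ _).trans (le_of_eq ?_)
    refine Finset.sum_congr rfl fun l _ => ?_
    simp only [hF, hb]
    congr 1
    refine Finset.sum_congr rfl fun k _ => ?_
    congr 1; ring
  calc _ ≤ (∑ l ∈ calL n L, F l) * Real.log (Real.log n) := by gcongr
    _ ≤ (∑ l ∈ calL n L, 4 * L * (1 / (((t l).natAbs : ℝ) + 1))) * Real.log (Real.log n) := by
      gcongr with l hl
      exact hFb l hl
    _ = (∑ i ∈ Finset.range (n + 1), ∑ l ∈ (calL n L).filter fun l => (t l).natAbs = i,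
          4 * L * (1 / (((t l).natAbs : ℝ) + 1))) * Real.log (Real.log n) := by
      rw [Finset.sum_fiberwise_of_maps_to htn]
    _ = (∑ i ∈ Finset.range (n + 1), (((calL n L).filter fun l => (t l).natAbs = i).card : ℝ) *
          (4 * L * (1 / ((i : ℝ) + 1)))) * Real.log (Real.log n) := by
      congr 1
      refine Finset.sum_congr rfl fun i _ => ?_
      rw [← nsmul_eq_mul, ← Finset.sum_const]
      refine Finset.sum_congr rfl fun l hl => ?_
      rw [(Finset.mem_filter.1 hl).2]
    _ = ∑ i ∈ Finset.range (n + 1), ((((calL n L).filter fun l => (t l).natAbs = i).card : ℝ) *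
          Real.log (Real.log n)) * (4 * L * (1 / ((i : ℝ) + 1))) := by
      rw [Finset.sum_mul]
      refine Finset.sum_congr rfl fun i _ => ?_
      ring
    _ ≤ ∑ i ∈ Finset.range (n + 1), (12 * Real.log n) * (4 * L * (1 / ((i : ℝ) + 1))) := by
      refine Finset.sum_le_sum fun i _ => ?_
      exact mul_le_mul_of_nonneg_right (hfib2 i) (by positivity)
    _ = 48 * L * Real.log n * ∑ i ∈ Finset.range (n + 1), (1 : ℝ) / ((i : ℝ) + 1) := by
      rw [Finset.mul_sum]
      refine Finset.sum_congr rfl fun i _ => ?_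
      ring
    _ ≤ 48 * L * Real.log n * (3 * Real.log n) := by
      gcongr
      exact harm_bound n hn
    _ = _ := by ring


/-- There exist `C > 0` and `n₀` such that for every `n ≥ n₀`, every positive
integer `L < 0.5·n^{1/2}`, and every nonempty `S ⊆ Z_n`, the set `U` of `u ∈ Z_n` not
representable as `u = s + w` with `(s, w) ∈ S × W` satisfies
`#U · #S · (#𝓛)² · (log log n)² ≤ C · n² (log n)⁴`. -/
theorem exceptional_set_bound :
    ∃ C : ℝ, C > 0 ∧ ∃ n₀ : ℕ, ∀ n : ℕ, n₀ ≤ n →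
      ∀ L : ℕ, 0 < L → (L : ℝ) < 0.5 * Real.sqrt n →
        ∀ S : Finset (ZMod n), S.Nonempty →
          (Nat.card {u : ZMod n | ¬ ∃ s ∈ S, ∃ w ∈ calW n L, u = s + w} : ℝ) *
              (S.card : ℝ) * ((calL n L).card : ℝ) ^ 2 * (Real.log (Real.log n)) ^ 2
            ≤ C * (n : ℝ) ^ 2 * (Real.log n) ^ 4 := by
  refine ⟨144 ^ 2, by norm_num, 16, ?_⟩
  intro n hn L hL hLn S _
  have : NeZero n := ⟨by omega⟩
  have hlog := log_real_ge hn
  have hll : 0 < Real.log (Real.log n) := Real.log_pos (by linarith)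
  have hL2 : 2 * L ≤ n := by
    have h1 : (1:ℝ) ≤ n := by exact_mod_cast (by omega : 1 ≤ n)
    have h2 : √(n:ℝ) ≤ n := by
      rw [Real.sqrt_le_left (by positivity)]
      nlinarith
    have : (2:ℝ) * L ≤ n := by linarith
    exact_mod_cast this
  classical
  set U : Finset (ZMod n) :=
    Finset.univ.filter fun u => ¬ ∃ s ∈ S, ∃ w ∈ calW n L, u = s + w with hU
  have hcard : Nat.card {u : ZMod n | ¬ ∃ s ∈ S, ∃ w ∈ calW n L, u = s + w} = U.card := by
    rw [Nat.card_coe_set_eq, ← Set.ncard_coe_finset]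
    congr 1
    ext u
    simp [hU]
  rw [hcard]
  have hLR : (0:ℝ) < L := by exact_mod_cast hL
  have key := fourier_bound n U S ((Finset.Icc 1 L) ×ˢ calL n L)
    (fun p => (p.1 : ZMod n) * (p.2 : ZMod n)⁻¹) (by
      intro u hu s hs p hp h
      rw [hU, Finset.mem_filter] at hu
      exact hu.2 ⟨s, hs, _, Finset.mem_image_of_mem _ hp, h⟩)
    (144 * L * (Real.log n) ^ 2 / Real.log (Real.log n))
    (fun a ha => by
      rw [le_div_iff₀ hll]
      exact expsum_bound n hn L hL hL2 a ha) (by positivity)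
  rw [Finset.card_product, Nat.card_Icc, div_pow, mul_div_assoc', le_div_iff₀ (by positivity)] at key
  push_cast [Nat.add_sub_cancel] at key
  have hL2pos : (0:ℝ) < (L:ℝ) ^ 2 := by positivity
  refine le_of_mul_le_mul_left ?_ hL2pos
  calc _ = _ := by ring
    _ ≤ _ := key
    _ = _ := by ring
end

section
/- There exist constants c₀ > 0 and n₀ such that the following holds. Let n ≥ n₀, let L be a positive integer with L < 0.5·n^{1/2}, let W = W(n, L), and let S ⊆ Z_n be a set with #S · #𝓛 > c₀ · n (log n)^{2} / log log n. Then every u ∈ Z_n can be represented as u = s + t + w with s, t ∈ S and w ∈ W; in particular W + S + S = Z_n. -/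
open Finset in
lemma aux_icc_geom (z : ℂ) (L : ℕ) :
    (z - 1) * ∑ k ∈ Finset.Icc 1 L, z ^ k = z ^ (L + 1) - z := by
  induction L with
  | zero => simp
  | succ L ih =>
    rw [Finset.sum_Icc_succ_top (by omega), mul_add, ih]
    ring

lemma aux_geo (n : ℕ) [NeZero n] (b : ZMod n) (L : ℕ) :
    2 * |(b.valMinAbs : ℝ)| * ‖∑ k ∈ Finset.Icc 1 L, ZMod.stdAddChar (b * (k : ZMod n))‖ ≤ n := by
  have hn : (0 : ℝ) < n := by exact_mod_cast Nat.pos_of_ne_zero (NeZero.ne n)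
  set x : ℤ := b.valMinAbs with hx
  set z : ℂ := ZMod.stdAddChar b with hz
  have hsum : ∑ k ∈ Finset.Icc 1 L, (ZMod.stdAddChar (b * (k : ZMod n)) : ℂ)
      = ∑ k ∈ Finset.Icc 1 L, z ^ k := by
    refine Finset.sum_congr rfl fun k _ => ?_
    rw [hz, ← AddChar.map_nsmul_eq_pow, nsmul_eq_mul, mul_comm]
  have hz1 : ‖z‖ = 1 := AddChar.norm_apply _ _
  have hxle : |(x : ℝ)| ≤ n / 2 := by
    have h := ZMod.natAbs_valMinAbs_le b
    have h2 : 2 * (b.valMinAbs.natAbs) ≤ n := by omega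
    have h3 : (2 : ℝ) * (b.valMinAbs.natAbs : ℝ) ≤ n := by exact_mod_cast h2
    rw [Nat.cast_natAbs, Int.cast_abs] at h3
    linarith
  have hzexp : z = Complex.exp (Complex.I * ((2 * Real.pi * x / n : ℝ) : ℂ)) := by
    rw [hz, ← ZMod.coe_valMinAbs b, ZMod.stdAddChar_coe]
    congr 1
    push_cast
    rw [← hx]
    ring
  have hlow : 4 * |(x : ℝ)| / n ≤ ‖z - 1‖ := by
    rw [hzexp, Complex.norm_exp_I_mul_ofReal_sub_one]
    have hpi := Real.pi_pos
    have e : 2 * Real.pi * x / n / 2 = Real.pi * (x / n) := by field_simp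
    have e2 : |Real.pi * ((x : ℝ) / n)| = Real.pi * (|(x : ℝ)| / n) := by
      rw [abs_mul, abs_div, abs_of_pos hpi, abs_of_pos hn]
    have h := @Real.mul_abs_le_abs_sin (Real.pi * ((x : ℝ) / n)) (by
      rw [e2]
      have : |(x : ℝ)| / n ≤ 1 / 2 := by rw [div_le_iff₀ hn]; linarith
      nlinarith)
    rw [e, Real.norm_eq_abs, abs_mul, abs_two]
    rw [e2] at h
    have e3 : 2 / Real.pi * (Real.pi * (|(x : ℝ)| / n)) = 2 * |(x : ℝ)| / n := by field_simp
    rw [e3] at h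
    calc 4 * |(x : ℝ)| / n = 2 * (2 * |(x : ℝ)| / n) := by ring
      _ ≤ _ := by linarith
  have hup : ‖z - 1‖ * ‖∑ k ∈ Finset.Icc 1 L, z ^ k‖ ≤ 2 := by
    rw [← norm_mul, aux_icc_geom]
    refine (norm_sub_le _ _).trans ?_
    rw [norm_pow, hz1]; norm_num
  rw [hsum]
  have h4 := (mul_le_mul_of_nonneg_right hlow (norm_nonneg (∑ k ∈ Finset.Icc 1 L, z ^ k))).trans hup
  rw [div_mul_eq_mul_div, div_le_iff₀ hn] at h4
  linarith

lemma aux_per (n : ℕ) [NeZero n] (a : ZMod n) (L ℓ : ℕ) (h1 : ℓ ≤ 2 * L)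
    (hc : Nat.Coprime ℓ n) :
    ∃ m : ℤ, (ℓ : ℤ) ∣ a.valMinAbs + m * n ∧ m.natAbs ≤ L ∧
      ‖∑ k ∈ Finset.Icc 1 L, ZMod.stdAddChar (a * ((k : ZMod n) * (ℓ : ZMod n)⁻¹))‖
        ≤ 4 * L / (1 + (m.natAbs : ℝ)) := by
  have hn : (0 : ℝ) < n := by exact_mod_cast Nat.pos_of_ne_zero (NeZero.ne n)
  set b : ZMod n := a * (ℓ : ZMod n)⁻¹ with hb
  have hsum : ∑ k ∈ Finset.Icc 1 L, (ZMod.stdAddChar (a * ((k : ZMod n) * (ℓ : ZMod n)⁻¹)) : ℂ)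
      = ∑ k ∈ Finset.Icc 1 L, ZMod.stdAddChar (b * (k : ZMod n)) := by
    refine Finset.sum_congr rfl fun k _ => ?_
    congr 1
    rw [hb]; ring
  have hmod : (((ℓ : ℤ) * b.valMinAbs - a.valMinAbs : ℤ) : ZMod n) = 0 := by
    push_cast
    rw [hb]
    have := ZMod.coe_mul_inv_eq_one ℓ hc
    linear_combination a * this
  obtain ⟨m, hm⟩ := (ZMod.intCast_zmod_eq_zero_iff_dvd _ n).1 hmod
  have heq : a.valMinAbs + m * n = (ℓ : ℤ) * b.valMinAbs := by linarith
  have hhalf : ∀ c : ZMod n, 2 * |(c.valMinAbs : ℝ)| ≤ n := by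
    intro c
    have h := ZMod.natAbs_valMinAbs_le c
    have h2 : 2 * (c.valMinAbs.natAbs) ≤ n := by omega
    have h3 : (2 : ℝ) * (c.valMinAbs.natAbs : ℝ) ≤ n := by exact_mod_cast h2
    rwa [Nat.cast_natAbs, Int.cast_abs] at h3
  have heqR : (a.valMinAbs : ℝ) + m * n = (ℓ : ℝ) * b.valMinAbs := by exact_mod_cast heq
  have ha := hhalf a
  have hbb := hhalf b
  have hg := aux_geo n b L
  have habs : |(ℓ : ℝ) * b.valMinAbs| = ℓ * |(b.valMinAbs : ℝ)| := by
    rw [abs_mul, Nat.abs_cast]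
  have hmn : |(m : ℝ) * n| = |(m : ℝ)| * n := by rw [abs_mul, Nat.abs_cast]
  have hle : |(m : ℝ)| * n ≤ ℓ * |(b.valMinAbs : ℝ)| + |(a.valMinAbs : ℝ)| := by
    rw [← hmn, ← habs, show (m : ℝ) * n = (ℓ : ℝ) * b.valMinAbs - a.valMinAbs by linarith]
    exact abs_sub _ _
  have hl : (ℓ : ℝ) ≤ 2 * L := by exact_mod_cast h1
  have hlb : (ℓ : ℝ) * |(b.valMinAbs : ℝ)| ≤ 2 * L * |(b.valMinAbs : ℝ)| :=
    mul_le_mul_of_nonneg_right hl (abs_nonneg _)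
  have hL0 : (0 : ℝ) ≤ L := Nat.cast_nonneg _
  have hcast : (m.natAbs : ℝ) = |(m : ℝ)| := by rw [Nat.cast_natAbs, Int.cast_abs]
  refine ⟨m, ⟨_, heq⟩, ?_, ?_⟩
  · have h5 : |(m : ℝ)| * n ≤ (L + 1 / 2) * n := by nlinarith
    have h6 := le_of_mul_le_mul_right h5 hn
    rw [← hcast] at h6
    have h7 : (m.natAbs : ℝ) < ((L + 1 : ℕ) : ℝ) := by push_cast; linarith
    have h8 : m.natAbs < L + 1 := by exact_mod_cast h7
    omega
  · rw [hsum, le_div_iff₀ (by positivity), hcast]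
    set Q := ‖∑ k ∈ Finset.Icc 1 L, ZMod.stdAddChar (b * (k : ZMod n))‖ with hS
    have hS0 : 0 ≤ Q := norm_nonneg _
    by_cases h0 : m = 0
    · have : Q ≤ L := by
        refine (norm_sum_le _ _).trans ?_
        simp [AddChar.norm_apply]
      rw [h0]; simp; linarith
    · have hm1 : (1 : ℝ) ≤ |(m : ℝ)| := by exact_mod_cast Int.one_le_abs h0
      have h9 : |(m : ℝ)| * n ≤ 4 * L * |(b.valMinAbs : ℝ)| := by nlinarith
      have h10 : |(m : ℝ)| * n * Q ≤ 2 * L * n := by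
        calc _ ≤ 4 * L * |(b.valMinAbs : ℝ)| * Q := mul_le_mul_of_nonneg_right h9 hS0
          _ = 2 * L * (2 * |(b.valMinAbs : ℝ)| * Q) := by ring
          _ ≤ _ := mul_le_mul_of_nonneg_left hg (by positivity)
      have h11 : |(m : ℝ)| * Q ≤ 2 * L := by
        refine le_of_mul_le_mul_right ?_ hn
        linarith
      nlinarith

lemma aux_count (T : Finset ℕ) (L N : ℕ) (hN : 0 < N) (hp : ∀ p ∈ T, p.Prime)
    (hL : ∀ p ∈ T, L < p) (hd : ∀ p ∈ T, p ∣ N) : L ^ T.card ≤ N := by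
  have h1 : ∏ p ∈ T, p ∣ N := Finset.prod_primes_dvd N (fun p h => (hp p h).prime) hd
  refine le_trans ?_ (Nat.le_of_dvd hN h1)
  exact Finset.pow_card_le_prod _ _ _ fun p h => (hL p h).le

lemma aux_bound (n : ℕ) [NeZero n] (hn3 : 3 ≤ n) (a : ZMod n) (ha0 : a ≠ 0) (L : ℕ)
    (hL2 : 2 ≤ L) (hLn : L + 1 ≤ n) :
    ‖∑ ℓ ∈ calL n L, ∑ k ∈ Finset.Icc 1 L,
      ZMod.stdAddChar (a * ((k : ZMod n) * (ℓ : ZMod n)⁻¹))‖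
        ≤ 32 * L * (Real.log n) ^ 2 / Real.log L := by
  have hnpos : (0 : ℝ) < n := by exact_mod_cast Nat.pos_of_ne_zero (NeZero.ne n)
  have hlogL : 0 < Real.log L := Real.log_pos (by exact_mod_cast hL2)
  have hlogn : 1 ≤ Real.log n := by
    rw [Real.le_log_iff_exp_le hnpos]
    have := Real.exp_one_lt_d9
    have h3 : (3 : ℝ) ≤ n := by exact_mod_cast hn3
    linarith
  have H : ∀ ℓ ∈ calL n L, ∃ m : ℤ, (ℓ : ℤ) ∣ a.valMinAbs + m * n ∧ m.natAbs ≤ L ∧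
      ‖∑ k ∈ Finset.Icc 1 L, ZMod.stdAddChar (a * ((k : ZMod n) * (ℓ : ZMod n)⁻¹))‖
        ≤ 4 * L / (1 + (m.natAbs : ℝ)) := by
    intro ℓ hℓ
    simp only [calL, Finset.mem_filter, Finset.mem_Ioc] at hℓ
    exact aux_per n a L ℓ hℓ.1.2 hℓ.2.2
  choose! m hmd hmL hmb using H
  have hfib : ∀ j ∈ Finset.range (L + 1),
      (((calL n L).filter fun ℓ => (m ℓ).natAbs = j).card : ℝ) ≤ 4 * Real.log n / Real.log L := by
    intro j hj
    have hjL : j ≤ L := by simpa [Nat.lt_succ_iff] using hj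
    set A : ℤ := a.valMinAbs with hA
    have hAne : A ≠ 0 := by rw [hA, Ne, ZMod.valMinAbs_eq_zero]; exact ha0
    have hAle : 2 * A.natAbs ≤ n := by
      have := ZMod.natAbs_valMinAbs_le a
      omega
    have hne : ∀ i : ℤ, A + i * n ≠ 0 := by
      intro i hi
      have hdv : (n : ℤ) ∣ A := ⟨-i, by linarith⟩
      have := Nat.le_of_dvd (Int.natAbs_pos.2 hAne) (Int.natCast_dvd.1 hdv)
      omega
    have hsz : ∀ i : ℤ, i.natAbs ≤ L → (A + i * n).natAbs ≤ n ^ 2 := by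
      intro i hi
      calc (A + i * n).natAbs ≤ A.natAbs + (i * n).natAbs := Int.natAbs_add_le _ _
        _ = A.natAbs + i.natAbs * n := by rw [Int.natAbs_mul, Int.natAbs_natCast]
        _ ≤ n + L * n := by
          have := Nat.mul_le_mul_right n hi
          omega
        _ = (L + 1) * n := by ring
        _ ≤ n * n := Nat.mul_le_mul_right n hLn
        _ = n ^ 2 := by ring
    have hcnt := aux_count ((calL n L).filter fun ℓ => (m ℓ).natAbs = j) L
      ((A + (j : ℤ) * n).natAbs * (A + (-(j : ℤ)) * n).natAbs)
      (Nat.mul_pos (Int.natAbs_pos.2 (hne _)) (Int.natAbs_pos.2 (hne _)))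
      (by
        intro p hp
        simp only [calL, Finset.mem_filter] at hp
        exact hp.1.2.1)
      (by
        intro p hp
        simp only [calL, Finset.mem_filter, Finset.mem_Ioc] at hp
        exact hp.1.1.1)
      (by
        intro p hp
        rw [Finset.mem_filter] at hp
        have hd := Int.natCast_dvd.1 (hmd p hp.1)
        rcases Int.natAbs_eq (m p) with h | h
        · rw [h, hp.2] at hd
          exact Dvd.dvd.mul_right hd _
        · rw [h, hp.2] at hd
          exact Dvd.dvd.mul_left hd _)
    have hcnt2 := hcnt.trans (Nat.mul_le_mul (hsz j (by simpa using hjL)) (hsz (-j) (by simpa using hjL)))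
    have hcnt3 : (L : ℝ) ^ ((calL n L).filter fun ℓ => (m ℓ).natAbs = j).card ≤ (n : ℝ) ^ 4 := by
      have : n ^ 2 * n ^ 2 = n ^ 4 := by ring
      rw [this] at hcnt2
      exact_mod_cast hcnt2
    have hL0 : (0 : ℝ) < L := by exact_mod_cast (by omega : 0 < L)
    have hlog := Real.log_le_log (by positivity) hcnt3
    rw [Real.log_pow, Real.log_pow] at hlog
    rw [le_div_iff₀ hlogL]
    exact_mod_cast hlog
  have hharm : ∑ j ∈ Finset.range (L + 1), (1 : ℝ) / (1 + (j : ℝ)) ≤ 2 * Real.log n := by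
    have h := harmonic_le_one_add_log (L + 1)
    have e : ((harmonic (L + 1) : ℚ) : ℝ) = ∑ j ∈ Finset.range (L + 1), (1 : ℝ) / (1 + (j : ℝ)) := by
      rw [harmonic]
      push_cast
      refine Finset.sum_congr rfl fun j _ => ?_
      rw [one_div, add_comm]
    rw [e] at h
    have h2 : Real.log ((L + 1 : ℕ) : ℝ) ≤ Real.log n :=
      Real.log_le_log (by positivity) (by exact_mod_cast hLn)
    linarith
  calc _ ≤ ∑ ℓ ∈ calL n L, 4 * (L : ℝ) / (1 + ((m ℓ).natAbs : ℝ)) :=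
        norm_sum_le_of_le _ hmb
    _ = ∑ j ∈ Finset.range (L + 1), ∑ ℓ ∈ calL n L with (m ℓ).natAbs = j,
          4 * (L : ℝ) / (1 + ((m ℓ).natAbs : ℝ)) :=
        (Finset.sum_fiberwise_of_maps_to
          (fun ℓ hℓ => Finset.mem_range.2 (Nat.lt_succ_of_le (hmL ℓ hℓ))) _).symm
    _ ≤ ∑ j ∈ Finset.range (L + 1), (4 * Real.log n / Real.log L * (4 * L)) * (1 / (1 + (j : ℝ))) := by
        refine Finset.sum_le_sum fun j hj => ?_
        have e : ∑ ℓ ∈ calL n L with (m ℓ).natAbs = j, 4 * (L : ℝ) / (1 + ((m ℓ).natAbs : ℝ))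
            = (((calL n L).filter fun ℓ => (m ℓ).natAbs = j).card : ℝ)
              * (4 * L * (1 / (1 + (j : ℝ)))) := by
          rw [← nsmul_eq_mul]
          refine Finset.sum_eq_card_nsmul fun ℓ hℓ => ?_
          rw [(Finset.mem_filter.1 hℓ).2]; ring
        rw [e, mul_assoc (4 * Real.log n / Real.log L)]
        exact mul_le_mul_of_nonneg_right (hfib j hj) (by positivity)
    _ ≤ (4 * Real.log n / Real.log L * (4 * L)) * (2 * Real.log n) := by
        rw [← Finset.mul_sum]
        exact mul_le_mul_of_nonneg_left hharm (by positivity)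
    _ = _ := by ring

lemma aux_orth (n : ℕ) [NeZero n] (b : ZMod n) :
    ∑ x : ZMod n, (ZMod.stdAddChar (x * b) : ℂ) = if b = 0 then (n : ℂ) else 0 := by
  have h := AddChar.sum_mulShift (R' := ℂ) b (ZMod.isPrimitive_stdAddChar n)
  rw [h, ZMod.card]
  split_ifs <;> simp

lemma aux_parseval (n : ℕ) [NeZero n] (S : Finset (ZMod n)) :
    ∑ a : ZMod n, ‖∑ s ∈ S, (ZMod.stdAddChar (a * s) : ℂ)‖ ^ 2 = n * S.card := by
  have h : ((∑ a : ZMod n, ‖∑ s ∈ S, (ZMod.stdAddChar (a * s) : ℂ)‖ ^ 2 : ℝ) : ℂ)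
      = n * S.card := by
    push_cast
    have e : ∀ a : ZMod n, ((‖∑ s ∈ S, (ZMod.stdAddChar (a * s) : ℂ)‖ : ℂ)) ^ 2
        = ∑ s ∈ S, ∑ t ∈ S, ZMod.stdAddChar (a * (s - t)) := by
      intro a
      rw [← Complex.mul_conj', map_sum, Finset.sum_mul_sum]
      refine Finset.sum_congr rfl fun s _ => Finset.sum_congr rfl fun t _ => ?_
      rw [← AddChar.map_neg_eq_conj, ← AddChar.map_add_eq_mul]
      congr 1; ring
    simp_rw [e]
    rw [Finset.sum_comm]
    have e2 : ∀ s ∈ S, ∑ a : ZMod n, ∑ t ∈ S, (ZMod.stdAddChar (a * (s - t)) : ℂ) = n := by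
      intro s hs
      rw [Finset.sum_comm]
      simp_rw [aux_orth, sub_eq_zero]
      rw [Finset.sum_ite_eq]
      simp [hs]
    rw [Finset.sum_congr rfl e2]
    simp [mul_comm]
  exact_mod_cast h

lemma aux_fourier (n : ℕ) [NeZero n] (S : Finset (ZMod n)) (L : ℕ) (u : ZMod n) (B : ℝ)
    (hB : ∀ a : ZMod n, a ≠ 0 → ‖∑ ℓ ∈ calL n L, ∑ k ∈ Finset.Icc 1 L,
      (ZMod.stdAddChar (a * ((k : ZMod n) * (ℓ : ZMod n)⁻¹)) : ℂ)‖ ≤ B) (hB0 : 0 ≤ B)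
    (hno : ∀ s ∈ S, ∀ t ∈ S, ∀ w ∈ calW n L, u ≠ s + t + w) :
    (S.card : ℝ) ^ 2 * ((calL n L).card * L) ≤ B * (n * S.card) := by
  set F : ZMod n → ℂ := fun a => ∑ s ∈ S, (ZMod.stdAddChar (a * s) : ℂ) with hF
  set G : ZMod n → ℂ := fun a => ∑ ℓ ∈ calL n L, ∑ k ∈ Finset.Icc 1 L,
      (ZMod.stdAddChar (a * ((k : ZMod n) * (ℓ : ZMod n)⁻¹)) : ℂ) with hG
  have hzero : ∑ a : ZMod n, F a * F a * G a * ZMod.stdAddChar (a * (-u)) = 0 := by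
    have e : ∀ a : ZMod n, F a * F a * G a * ZMod.stdAddChar (a * (-u))
        = ∑ s ∈ S, ∑ t ∈ S, ∑ ℓ ∈ calL n L, ∑ k ∈ Finset.Icc 1 L,
          (ZMod.stdAddChar (a * (s + t + (k : ZMod n) * (ℓ : ZMod n)⁻¹ - u)) : ℂ) := by
      intro a
      simp only [hF, hG]
      rw [Finset.sum_mul_sum]
      simp_rw [Finset.sum_mul, Finset.mul_sum, Finset.sum_mul]
      refine Finset.sum_congr rfl fun s _ => Finset.sum_congr rfl fun t _ =>
        Finset.sum_congr rfl fun ℓ _ => Finset.sum_congr rfl fun k _ => ?_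
      rw [← AddChar.map_add_eq_mul, ← AddChar.map_add_eq_mul, ← AddChar.map_add_eq_mul]
      congr 1; ring
    simp_rw [e]
    rw [Finset.sum_comm]
    refine Finset.sum_eq_zero fun s hs => ?_
    rw [Finset.sum_comm]
    refine Finset.sum_eq_zero fun t ht => ?_
    rw [Finset.sum_comm]
    refine Finset.sum_eq_zero fun ℓ hℓ => ?_
    rw [Finset.sum_comm]
    refine Finset.sum_eq_zero fun k hk => ?_
    rw [aux_orth, if_neg]
    intro h0
    refine hno s hs t ht ((k : ZMod n) * (ℓ : ZMod n)⁻¹) ?_ (sub_eq_zero.1 h0).symm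
    exact Finset.mem_image.2 ⟨(k, ℓ), Finset.mk_mem_product hk hℓ, rfl⟩
  rw [← Finset.add_sum_erase _ _ (Finset.mem_univ (0 : ZMod n))] at hzero
  have h0 : F 0 * F 0 * G 0 * ZMod.stdAddChar ((0 : ZMod n) * (-u))
      = (((S.card : ℝ) ^ 2 * ((calL n L).card * L) : ℝ) : ℂ) := by
    simp only [hF, hG, zero_mul, AddChar.map_zero_eq_one, Finset.sum_const, Nat.card_Icc,
      nsmul_eq_mul, mul_one, add_tsub_cancel_right]
    push_cast
    ring
  rw [h0] at hzero
  have hnorm : (S.card : ℝ) ^ 2 * ((calL n L).card * L)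
      = ‖∑ a ∈ Finset.univ.erase (0 : ZMod n), F a * F a * G a * ZMod.stdAddChar (a * (-u))‖ := by
    rw [← norm_neg, ← eq_neg_of_add_eq_zero_left hzero, Complex.norm_real, Real.norm_eq_abs,
      abs_of_nonneg (by positivity)]
  rw [hnorm, ← aux_parseval n S, Finset.mul_sum]
  calc _ ≤ ∑ a ∈ Finset.univ.erase (0 : ZMod n), B * ‖F a‖ ^ 2 := by
        refine norm_sum_le_of_le _ fun a ha => ?_
        rw [norm_mul, norm_mul, norm_mul, AddChar.norm_apply, mul_one, mul_comm, sq]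
        exact mul_le_mul_of_nonneg_right (hB a (Finset.ne_of_mem_erase ha)) (by positivity)
    _ ≤ _ := Finset.sum_le_sum_of_subset_of_nonneg (Finset.erase_subset _ _)
        fun a _ _ => by positivity

/-- There exist `c₀ > 0` and `n₀` such that for every `n ≥ n₀`, every positive
integer `L < 0.5·n^{1/2}`, and every `S ⊆ Z_n` with
`#S · #𝓛 > c₀ · n (log n)² / log log n`, every `u ∈ Z_n` can be written as
`u = s + t + w` with `s, t ∈ S` and `w ∈ W`; in particular `W + S + S = Z_n`. -/
theorem every_residue_represented :
    ∃ c₀ : ℝ, c₀ > 0 ∧ ∃ n₀ : ℕ, ∀ n : ℕ, n₀ ≤ n →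
      ∀ L : ℕ, 0 < L → (L : ℝ) < 0.5 * Real.sqrt n →
        ∀ S : Finset (ZMod n),
          (S.card : ℝ) * ((calL n L).card : ℝ) >
              c₀ * n * (Real.log n) ^ 2 / Real.log (Real.log n) →
            ∀ u : ZMod n, ∃ s ∈ S, ∃ t ∈ S, ∃ w ∈ calW n L, u = s + t + w := by
  refine ⟨32, by norm_num, 3, ?_⟩
  intro n hn3 L hLpos hLs S hS u
  have : NeZero n := ⟨by omega⟩
  have hnR : (3 : ℝ) ≤ n := by exact_mod_cast hn3
  have hnpos : (0 : ℝ) < n := by linarith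
  have hlogn : 1 < Real.log n := by
    rw [Real.lt_log_iff_exp_lt hnpos]
    have := Real.exp_one_lt_d9
    linarith
  have hll : 0 < Real.log (Real.log n) := Real.log_pos hlogn
  have hllle : Real.log (Real.log n) ≤ Real.log n := by
    have := Real.log_le_sub_one_of_pos (by linarith : 0 < Real.log n)
    linarith
  have hScard : (S.card : ℝ) ≤ n := by
    have := Finset.card_le_univ S
    rw [ZMod.card] at this
    exact_mod_cast this
  have hLcard : ((calL n L).card : ℝ) ≤ L := by
    have : (calL n L).card ≤ (Finset.Ioc L (2 * L)).card := Finset.card_filter_le _ _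
    rw [Nat.card_Ioc] at this
    have h2 : (calL n L).card ≤ L := by omega
    exact_mod_cast h2
  have hlow : Real.log n ≤ (Real.log n) ^ 2 / Real.log (Real.log n) := by
    rw [le_div_iff₀ hll]; nlinarith
  have hS' : 32 * n * ((Real.log n) ^ 2 / Real.log (Real.log n)) < S.card * (calL n L).card := by
    rw [← mul_div_assoc]; exact hS
  have hprod : (S.card : ℝ) * ((calL n L).card : ℝ) ≤ n * L :=
    mul_le_mul hScard hLcard (by positivity) hnpos.le
  have hLbig : 32 * Real.log n < L := by
    have h1 : 32 * n * Real.log n ≤ 32 * n * ((Real.log n) ^ 2 / Real.log (Real.log n)) :=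
      mul_le_mul_of_nonneg_left hlow (by positivity)
    have h2 : n * (32 * Real.log n) < n * L := by linarith
    exact lt_of_mul_lt_mul_left h2 hnpos.le
  have hLR : (0 : ℝ) < L := by exact_mod_cast hLpos
  have hL2 : 2 ≤ L := by
    have : (2 : ℝ) ≤ L := by linarith
    exact_mod_cast this
  have hLn : L + 1 ≤ n := by
    have h1 : Real.sqrt n ≤ n := by
      rw [Real.sqrt_le_left hnpos.le]; nlinarith
    have h2 : (L : ℝ) < n := by
      norm_num at hLs
      linarith
    have h3 : L < n := by exact_mod_cast h2
    omega
  have hloglog : Real.log (Real.log n) ≤ Real.log L :=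
    Real.log_le_log (by linarith) (by linarith)
  by_contra hcon
  push Not at hcon
  have hSpos : (0 : ℝ) < S.card := by
    rcases Nat.eq_zero_or_pos S.card with h | h
    · rw [h] at hS'
      have : 0 ≤ 32 * (n : ℝ) * ((Real.log n) ^ 2 / Real.log (Real.log n)) := by positivity
      simp at hS'
      linarith
    · exact_mod_cast h
  have hmain := aux_fourier n S L u (32 * L * (Real.log n) ^ 2 / Real.log (Real.log n))
    (fun a ha => (aux_bound n hn3 a ha L hL2 hLn).trans
      (div_le_div_of_nonneg_left (by positivity) hll hloglog)) (by positivity) hcon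
  have hkey := mul_lt_mul_of_pos_left hS' (mul_pos hSpos hLR)
  have e : (32 * L * (Real.log n) ^ 2 / Real.log (Real.log n)) * (n * S.card)
      = S.card * L * (32 * n * ((Real.log n) ^ 2 / Real.log (Real.log n))) := by ring
  rw [e] at hmain
  nlinarith
end
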